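/- arXiv:2111.10323 — 2 statements merged into one kernel-verified Lean document; each statement's English description precedes it below -/
import Mathlib

section
/- Let $p \in (0,1)$, $0 < d \le 1 \le u$ with $u \ne d$, $\tilde{k}_0(n,u,d) = \lfloor n \ln(1/d)/\ln(u/d) \rfloor$, let $X_n$ be a Binomial$(n,p)$ random variable, and define the net profit $T_n = -1 + \sum_{k=0}^{\tilde{k}_0(n,u,d)} \mathbf{1}\{X_n = k\}\, u^k d^{n-k} + 2\cdot\mathbf{1}\{X_n \ge \tilde{k}_0(n,u,d)+1\}$. Then $\mathbb{V}(T_n) \to 0$ as $n \to \infty$ if $u^p d^{1-p} \ne 1$, and $\mathbb{V}(T_n) \to 1$ as $n \to \infty$ if $u^p d^{1-p} = 1$. -/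
open Filter MeasureTheory

/-- Threshold separating losing from winning numbers of heads. -/
noncomputable def ktilde (n : ℕ) (u d : ℝ) : ℕ :=
  ⌊(n : ℝ) * Real.log (1/d) / Real.log (u/d)⌋₊

open ProbabilityTheory

/-- Standardized number of heads. -/
noncomputable def stdY (p : ℝ) (n : ℕ) (k : ℕ) : ℝ :=
  (√(n : ℝ))⁻¹ * (((k : ℝ) - n * p) / √(p * (1 - p)))

/-- Net profit as a function of the number of heads. -/
noncomputable def gfun (L q : ℝ) (n : ℕ) (k : ℕ) : ℝ :=
  if (k : ℝ) ≤ n * q then Real.exp (L * (k - n * q)) - 1 else 1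

lemma bin_ae_le (n : ℕ) (p : unitInterval) : ∀ᵐ k ∂(binomial n p), k ≤ n :=
  ae_le_of_hasLaw_binomial (X := id) HasLaw.id

lemma bin_second_moment (n : ℕ) (p : unitInterval) :
    ∫ k, ((k : ℝ) - n * p) ^ 2 ∂(binomial n p) = n * p * (1 - p) := by
  rw [integral_binomial]
  have h := congrArg (Polynomial.eval (p : ℝ)) (bernsteinPolynomial.variance ℝ n)
  simp only [Polynomial.eval_finsetSum, bernsteinPolynomial, Polynomial.eval_mul,
    Polynomial.eval_pow, Polynomial.eval_sub, Polynomial.eval_natCast, Polynomial.eval_X,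
    Polynomial.eval_one, nsmul_eq_mul] at h
  rw [← h]
  have : Finset.Iic n = Finset.range (n + 1) := by ext; simp
  rw [this]
  refine Finset.sum_congr rfl fun k _ => ?_
  simp only [smul_eq_mul]
  ring

lemma charFun_bin (n : ℕ) (p : unitInterval) (t : ℝ) :
    charFun ((binomial n p).map (stdY p n)) t =
      (charFun ((binomial 1 p).map (fun k : ℕ => ((k : ℝ) - p) / √(p * (1 - p))))
        ((√(n : ℝ))⁻¹ * t)) ^ n := by
  rw [charFun_apply_real, charFun_apply_real,
    integral_map (Measurable.of_discrete).aemeasurable (by fun_prop),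
    integral_map (Measurable.of_discrete).aemeasurable (by fun_prop),
    integral_binomial, integral_binomial]
  have h1 : Finset.Iic 1 = {0, 1} := by decide
  have h2 : Finset.Iic n = Finset.range (n + 1) := by ext; simp
  rw [h1, h2, Finset.sum_pair (by decide), add_comm (_ • _), add_pow]
  refine Finset.sum_congr rfl fun k hk => ?_
  have hk : k ≤ n := by simp at hk; omega
  obtain ⟨m, rfl⟩ := Nat.exists_eq_add_of_le hk
  simp only [stdY, Nat.add_sub_cancel_left]
  simp only [Complex.real_smul]
  simp
  rw [mul_pow, mul_pow, ← Complex.exp_nat_mul, ← Complex.exp_nat_mul]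
  rw [show ∀ a b c d e: ℂ, a * b * (c * d) * e = (e * a * c) * (b * d) by intros; ring,
    ← Complex.exp_add]
  congr 2
  ring

lemma bin_clt (p : unitInterval) (hp0 : 0 < (p : ℝ)) (hp1 : (p : ℝ) < 1) :
    Tendsto (β := ProbabilityMeasure ℝ)
      (fun n : ℕ => ⟨(binomial n p).map (stdY p n),
        Measure.isProbabilityMeasure_map (Measurable.of_discrete).aemeasurable⟩) atTop
      (nhds ⟨gaussianReal 0 1, inferInstance⟩) := by
  refine ProbabilityMeasure.tendsto_iff_tendsto_charFun.2 fun t ↦ ?_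
  have h1 : Finset.Iic 1 = {0, 1} := by decide
  have hv : 0 < (p : ℝ) * (1 - p) := mul_pos hp0 (by linarith)
  have := tendsto_charFun_inv_sqrt_mul_pow (P := binomial 1 p)
    (X := fun k : ℕ => ((k : ℝ) - p) / √(p * (1 - p)))
    (Measurable.of_discrete).aemeasurable ?_ ?_ t
  · simpa [charFun_bin, charFun_gaussianReal, neg_div] using this
  · rw [integral_binomial, h1, Finset.sum_pair (by decide)]
    simp; ring
  · rw [integral_binomial, h1, Finset.sum_pair (by decide)]
    simp [div_pow, Real.sq_sqrt hv.le]
    have : 1 - (p : ℝ) ≠ 0 := by linarith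
    field_simp
    ring

lemma gauss_Iic : gaussianReal 0 1 (Set.Iic 0) = 2⁻¹ := by
  have := nullSingletonClass_gaussianReal (μ := 0) (v := 1) (by simp)
  have h1 : gaussianReal 0 1 (Set.Ioi 0) = gaussianReal 0 1 (Set.Iic 0) := by
    conv_rhs => rw [← neg_zero, ← gaussianReal_map_neg (μ := 0), neg_zero]
    rw [Measure.map_apply (by fun_prop) measurableSet_Iic]
    simp only [Set.preimage, Set.mem_Iic, Left.neg_nonpos_iff]
    exact measure_congr Ioi_ae_eq_Ici
  have h2 := measure_add_measure_compl (μ := gaussianReal 0 1) (measurableSet_Iic (a := (0:ℝ)))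
  rw [Set.compl_Iic, h1, measure_univ, ← two_mul] at h2
  exact ENNReal.eq_inv_of_mul_eq_one_left (by rwa [mul_comm])

lemma bin_Iic (p : unitInterval) (hp0 : 0 < (p : ℝ)) (hp1 : (p : ℝ) < 1) :
    Tendsto (fun n : ℕ => (binomial n p).real {k | (k : ℝ) ≤ n * p}) atTop (nhds 2⁻¹) := by
  have := nullSingletonClass_gaussianReal (μ := 0) (v := 1) (by simp)
  have := ProbabilityMeasure.tendsto_measure_of_null_frontier_of_tendsto' (bin_clt p hp0 hp1)
    (E := Set.Iic 0) (by simp)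
  simp only [ProbabilityMeasure.coe_mk, gauss_Iic] at this
  have h2 := (ENNReal.tendsto_toReal (by simp)).comp this
  simp only [ENNReal.toReal_inv, ENNReal.toReal_ofNat] at h2
  refine h2.congr' ?_
  filter_upwards [eventually_gt_atTop 0] with n hn
  have hv : 0 < (p : ℝ) * (1 - p) := mul_pos hp0 (by linarith)
  have hn' : (0 : ℝ) < √n := by positivity
  rw [Function.comp_apply, Measure.map_apply Measurable.of_discrete measurableSet_Iic, Measure.real]
  congr 2
  ext k
  have := Real.sqrt_pos.2 hv
  simp only [stdY, Set.mem_preimage, Set.mem_Iic, Set.mem_ofPred_eq]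
  rw [← div_eq_inv_mul, div_le_iff₀ hn', zero_mul, div_le_iff₀ this, zero_mul, sub_nonpos]

lemma bin_Icc (p : unitInterval) (hp0 : 0 < (p : ℝ)) (hp1 : (p : ℝ) < 1) (η : ℝ) (hη : 0 < η) :
    ∃ δ > 0, ∀ᶠ n : ℕ in atTop,
      (binomial n p).real {k | |(k : ℝ) - n * p| ≤ δ * √n} < η := by
  have := nullSingletonClass_gaussianReal (μ := 0) (v := 1) (by simp)
  have hv : 0 < (p : ℝ) * (1 - p) := mul_pos hp0 (by linarith)
  have hs := Real.sqrt_pos.2 hv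
  have h1 := tendsto_measure_Icc_nhdsWithin_right' (gaussianReal 0 1) 0
  simp only [measure_singleton, zero_sub, zero_add] at h1
  obtain ⟨δ, hδ, hlt⟩ := ((h1.eventually_lt_const (u := ENNReal.ofReal η) (by simpa)).and
    self_mem_nhdsWithin).exists
  have hlt : 0 < δ := hlt
  refine ⟨δ * √(p * (1 - p)), by positivity, ?_⟩
  have := ProbabilityMeasure.tendsto_measure_of_null_frontier_of_tendsto' (bin_clt p hp0 hp1)
    (E := Set.Icc (-δ) δ) (by
      rw [frontier_Icc (by linarith)]
      exact (Set.toFinite _).measure_zero (gaussianReal 0 1))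
  filter_upwards [this.eventually_lt_const hδ, eventually_gt_atTop 0] with n h hn
  have hn' : (0 : ℝ) < √n := by positivity
  simp only [ProbabilityMeasure.coe_mk] at h
  rw [Measure.map_apply Measurable.of_discrete measurableSet_Icc] at h
  rw [Measure.real]
  refine (ENNReal.toReal_lt_of_lt_ofReal ?_)
  convert h using 2
  ext k
  simp only [stdY, Set.mem_preimage, Set.mem_Icc, Set.mem_ofPred_eq]
  rw [← abs_le, ← div_eq_inv_mul, abs_div, abs_div, abs_of_pos hn', abs_of_pos hs, div_le_iff₀ hn',
    div_le_iff₀ hs]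
  ring_nf

lemma gfun_bounds {L q : ℝ} (hL : 0 < L) (n k : ℕ) : -1 ≤ gfun L q n k ∧ gfun L q n k ≤ 1 := by
  unfold gfun
  split_ifs with h
  · have h1 := Real.exp_pos (L * (k - n * q))
    have h2 : Real.exp (L * (k - n * q)) ≤ 1 :=
      Real.exp_le_one_iff.2 (mul_nonpos_of_nonneg_of_nonpos hL.le (by linarith))
    constructor <;> linarith
  · norm_num

lemma var_le_aux (n : ℕ) (p : unitInterval) (g : ℕ → ℝ) (c : ℝ) :
    Var[g; binomial n p] ≤ ∫ k, (g k - c) ^ 2 ∂(binomial n p) := by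
  rw [← variance_sub_const (Measurable.of_discrete).aestronglyMeasurable c]
  exact variance_le_expectation_sq (Measurable.of_discrete).aestronglyMeasurable

lemma var_ne_aux {L q : ℝ} (p : unitInterval) {a ε c : ℝ} (hε : 0 < ε) (ha : 0 < a)
    (hb : ∀ n k : ℕ, 0 < n →
      (gfun L q n k - c) ^ 2 ≤ Real.exp (-a * n) + 4 * (((k : ℝ) - n * p) ^ 2 / (n * ε) ^ 2)) :
    Tendsto (fun n : ℕ => Var[gfun L q n; binomial n p]) atTop (nhds 0) := by
  have h1 : Tendsto (fun n : ℕ => Real.exp (-a * n)) atTop (nhds 0) := by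
    refine Real.tendsto_exp_atBot.comp ?_
    exact tendsto_natCast_atTop_atTop.const_mul_atTop_of_neg (by linarith)
  have h2 : Tendsto (fun n : ℕ => (4 * (p * (1 - p)) / ε ^ 2) / (n : ℝ)) atTop (nhds 0) :=
    tendsto_const_div_atTop_nhds_zero_nat _
  have h3 := h1.add h2
  rw [add_zero] at h3
  refine squeeze_zero' (Eventually.of_forall fun n => variance_nonneg _ _) ?_ h3
  filter_upwards [eventually_gt_atTop 0] with n hn
  have hn' : (0 : ℝ) < n := by exact_mod_cast hn
  refine (var_le_aux n p _ c).trans ?_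
  refine (integral_mono (integrable_binomial _) (integrable_binomial _)
    (fun k => hb n k hn)).trans ?_
  rw [integral_add (integrable_binomial _) (integrable_binomial _), integral_const_mul,
    integral_div, bin_second_moment]
  simp
  apply le_of_eq
  field_simp

lemma var_ne {L q : ℝ} (hL : 0 < L) (p : unitInterval) (hpq : (p : ℝ) ≠ q) :
    Tendsto (fun n : ℕ => Var[gfun L q n; binomial n p]) atTop (nhds 0) := by
  rcases lt_or_gt_of_ne hpq with h | h
  · have hε : 0 < (q - p) / 2 := by linarith
    refine var_ne_aux p (a := L * ((q - p) / 2)) (c := -1) hε (by positivity) ?_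
    intro n k hn
    have hn' : (0 : ℝ) < n := by exact_mod_cast hn
    have hb := gfun_bounds (q := q) hL n k
    set ε := (q - p) / 2 with hεd
    by_cases hk : (k : ℝ) ≤ n * p + n * ε
    · have : n * q = n * p + 2 * (n * ε) := by rw [hεd]; ring
      have hnε : 0 < n * ε := by positivity
      have h1 : (k : ℝ) ≤ n * q := by linarith
      have h2 : gfun L q n k - -1 ≤ Real.exp (-(L * ε) * n) := by
        rw [gfun, if_pos h1]
        simp only [sub_neg_eq_add, sub_add_cancel]
        apply Real.exp_le_exp.2
        have : (k : ℝ) - n * q ≤ - (n * ε) := by linarith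
        nlinarith
      have h3 : Real.exp (-(L * ε) * n) ≤ 1 := by
        apply Real.exp_le_one_iff.2
        have : 0 < L * ε * n := by positivity
        linarith
      have h4 : 0 ≤ 4 * (((k : ℝ) - n * p) ^ 2 / (n * ε) ^ 2) := by positivity
      have h5 := Real.exp_pos (-(L * ε) * n)
      nlinarith [hb.1]
    · have h1 : 1 ≤ ((k : ℝ) - n * p) ^ 2 / (n * ε) ^ 2 := by
        rw [le_div_iff₀ (by positivity), one_mul]
        exact pow_le_pow_left₀ (by positivity) (by linarith) 2
      have h5 := Real.exp_pos (-(L * ε) * n)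
      nlinarith [hb.1, hb.2]
  · have hε : 0 < p - q := by linarith
    refine var_ne_aux p (a := 1) (c := 1) hε (by positivity) ?_
    intro n k hn
    have hn' : (0 : ℝ) < n := by exact_mod_cast hn
    have hb := gfun_bounds (q := q) hL n k
    have h5 := Real.exp_pos (-1 * n)
    by_cases hk : (k : ℝ) ≤ n * q
    · have h1 : 1 ≤ ((k : ℝ) - n * p) ^ 2 / (n * (p - q)) ^ 2 := by
        rw [le_div_iff₀ (by positivity), one_mul, ← sq_abs ((k : ℝ) - _)]
        refine pow_le_pow_left₀ (by positivity) ?_ 2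
        rw [abs_of_nonpos (by nlinarith)]
        linarith
      nlinarith [hb.1, hb.2]
    · have h4 : 0 ≤ 4 * (((k : ℝ) - n * p) ^ 2 / (n * (p - q)) ^ 2) := by positivity
      rw [gfun, if_neg hk]
      linarith

/-- Limit sign profile. -/
noncomputable def sfun (q : ℝ) (n : ℕ) (k : ℕ) : ℝ :=
  if (k : ℝ) ≤ n * q then -1 else 1

lemma err_tendsto {L : ℝ} (hL : 0 < L) (p : unitInterval) (hp0 : 0 < (p : ℝ))
    (hp1 : (p : ℝ) < 1) :
    Tendsto (fun n : ℕ => ∫ k, |gfun L p n k - sfun p n k| ∂(binomial n p)) atTop (nhds 0) := by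
  rw [Metric.tendsto_atTop']
  suffices h : ∀ η > 0, ∀ᶠ n : ℕ in atTop,
      ∫ k, |gfun L p n k - sfun p n k| ∂(binomial n p) < η by
    intro η hη
    obtain ⟨N, hN⟩ := eventually_atTop.1 (h η hη)
    refine ⟨N, fun n hn => ?_⟩
    rw [Real.dist_0_eq_abs, abs_of_nonneg (integral_nonneg fun k => abs_nonneg _)]
    exact hN n hn.le
  intro η hη
  obtain ⟨δ, hδ, hev⟩ := bin_Icc p hp0 hp1 (η / 2) (by positivity)
  have h1 : Tendsto (fun n : ℕ => Real.exp (-(L * δ) * √(n : ℝ))) atTop (nhds 0) := by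
    refine Real.tendsto_exp_atBot.comp ?_
    refine Tendsto.const_mul_atTop_of_neg (neg_lt_zero.2 (by positivity)) ?_
    exact Real.tendsto_sqrt_atTop.comp tendsto_natCast_atTop_atTop
  filter_upwards [hev, h1.eventually_lt_const (half_pos hη)] with n hn1 hn2
  have hb : ∀ k : ℕ, |gfun L p n k - sfun p n k| ≤ Real.exp (-(L * δ) * √(n : ℝ)) +
      Set.indicator {k : ℕ | |(k : ℝ) - n * p| ≤ δ * √n} 1 k := by
    intro k
    have hpos := Real.exp_pos (-(L * δ) * √(n : ℝ))
    have hind : (0 : ℝ) ≤ Set.indicator {k : ℕ | |(k : ℝ) - n * p| ≤ δ * √n} 1 k :=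
      Set.indicator_nonneg (by simp) _
    unfold gfun sfun
    split_ifs with h
    · rw [sub_neg_eq_add, sub_add_cancel, abs_of_pos (Real.exp_pos _)]
      by_cases hk : |(k : ℝ) - n * p| ≤ δ * √n
      · have h1 : Real.exp (L * ((k : ℝ) - n * p)) ≤ 1 :=
          Real.exp_le_one_iff.2 (mul_nonpos_of_nonneg_of_nonpos hL.le (by linarith))
        rw [Set.indicator_of_mem (by exact hk)]
        simp only [Pi.one_apply]
        linarith
      · rw [abs_of_nonpos (by linarith)] at hk
        have h1 : Real.exp (L * ((k : ℝ) - n * p)) ≤ Real.exp (-(L * δ) * √(n : ℝ)) := by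
          apply Real.exp_le_exp.2
          have : (k : ℝ) - n * p ≤ -(δ * √n) := by linarith
          nlinarith
        linarith
    · rw [sub_self, abs_zero]; linarith
  refine (integral_mono (integrable_binomial _) (integrable_binomial _) hb).trans_lt ?_
  rw [integral_add (integrable_binomial _) (integrable_binomial _),
    integral_indicator_one (by measurability), integral_const, probReal_univ, one_smul]
  linarith

lemma sfun_int (n : ℕ) (p : unitInterval) : ∫ k, sfun p n k ∂(binomial n p) =
    1 - 2 * (binomial n p).real {k | (k : ℝ) ≤ n * p} := by
  have : sfun p n = fun k => 1 - 2 * Set.indicator {k : ℕ | (k : ℝ) ≤ n * p} 1 k := by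
    ext k
    by_cases h : (k : ℝ) ≤ n * p <;> simp [sfun, h] <;> norm_num
  rw [this, integral_sub (integrable_binomial _) (integrable_binomial _), integral_const_mul,
    integral_indicator_one (by measurability)]
  simp

lemma var_eq {L : ℝ} (hL : 0 < L) (p : unitInterval) (hp0 : 0 < (p : ℝ))
    (hp1 : (p : ℝ) < 1) :
    Tendsto (fun n : ℕ => Var[gfun L p n; binomial n p]) atTop (nhds 1) := by
  have he := err_tendsto hL p hp0 hp1
  have h1 : Tendsto (fun n : ℕ => ∫ k, gfun L p n k ∂(binomial n p)) atTop (nhds 0) := by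
    have hs : Tendsto (fun n : ℕ => ∫ k, sfun p n k ∂(binomial n p)) atTop (nhds 0) := by
      simp_rw [sfun_int]
      have := ((bin_Iic p hp0 hp1).const_mul 2).const_sub 1
      norm_num at this
      exact this
    have hd : Tendsto (fun n : ℕ => ∫ k, (gfun L p n k - sfun p n k) ∂(binomial n p)) atTop
        (nhds 0) := squeeze_zero_norm (fun n => norm_integral_le_integral_norm _) he
    have := hd.add hs
    rw [add_zero] at this
    refine this.congr fun n => ?_
    rw [integral_sub (integrable_binomial _) (integrable_binomial _), sub_add_cancel]
  have h2 : Tendsto (fun n : ℕ => ∫ k, (gfun L p n k) ^ 2 ∂(binomial n p)) atTop (nhds 1) := by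
    have hd : Tendsto (fun n : ℕ => ∫ k, ((gfun L p n k) ^ 2 - 1) ∂(binomial n p)) atTop
        (nhds 0) := by
      refine squeeze_zero_norm (fun n => (norm_integral_le_integral_norm _).trans
        (integral_mono (g := fun k => 2 * |gfun L p n k - sfun p n k|)
          (integrable_binomial _) (integrable_binomial _) ?_)) ?_
      · intro k
        have hb := gfun_bounds (q := p) hL n k
        have hs2 : sfun p n k = -1 ∨ sfun p n k = 1 := by unfold sfun; split_ifs <;> simp
        have : gfun L p n k ^ 2 - 1 =
            (gfun L p n k - sfun p n k) * (gfun L p n k + sfun p n k) := by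
          rcases hs2 with h | h <;> rw [h] <;> ring
        simp only [Real.norm_eq_abs]
        rw [this, abs_mul, mul_comm]
        refine mul_le_mul_of_nonneg_right ?_ (abs_nonneg _)
        rw [abs_le]
        rcases hs2 with h | h <;> rw [h] <;> constructor <;> linarith
      · simp_rw [integral_const_mul]
        simpa using he.const_mul 2
    have := hd.add_const 1
    rw [zero_add] at this
    refine this.congr fun n => ?_
    rw [integral_sub (integrable_binomial _) (integrable_binomial _)]
    simp
  have h3 := h2.sub (h1.pow 2)
  norm_num at h3
  refine h3.congr fun n => ?_
  rw [variance_eq_sub]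
  · rfl
  · refine (memLp_two_iff_integrable_sq (Measurable.of_discrete).aestronglyMeasurable).2 ?_
    exact integrable_binomial _

theorem variance_of_net_profit_threshold
    {Ω : Type*} [MeasurableSpace Ω] (μ : Measure Ω) [IsProbabilityMeasure μ]
    (p u d : ℝ) (hp0 : 0 < p) (hp1 : p < 1)
    (hd0 : 0 < d) (hd1 : d ≤ 1) (hu : 1 ≤ u) (hne : u ≠ d)
    (X : ℕ → Ω → ℕ) (hXmeas : ∀ n, Measurable (X n))
    (hXbin : ∀ n k : ℕ,
      μ {ω | X n ω = k} = ENNReal.ofReal ((n.choose k : ℝ) * p^k * (1 - p)^(n-k)))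
    (T : ℕ → Ω → ℝ)
    (hT : ∀ n ω, T n ω =
      -1 + (∑ k ∈ Finset.range (ktilde n u d + 1),
              if X n ω = k then u^k * d^(n-k) else 0)
        + 2 * (if ktilde n u d + 1 ≤ X n ω then (1 : ℝ) else 0)) :
    (u ^ p * d ^ (1 - p) ≠ 1 →
      Tendsto (fun n : ℕ => ProbabilityTheory.variance (T n) μ) atTop (nhds 0)) ∧
    (u ^ p * d ^ (1 - p) = 1 →
      Tendsto (fun n : ℕ => ProbabilityTheory.variance (T n) μ) atTop (nhds 1)) := by
  set P : unitInterval := ⟨p, hp0.le, hp1.le⟩ with hP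
  have hu0 : 0 < u := by linarith
  have hdu : d < u := lt_of_le_of_ne (hd1.trans hu) hne.symm
  set L := Real.log (u / d) with hLdef
  have hL : 0 < L := Real.log_pos ((one_lt_div hd0).2 hdu)
  set q := Real.log (1 / d) / L with hq
  have hlog : L = Real.log u - Real.log d := Real.log_div hu0.ne' hd0.ne'
  have hLq : L * q = - Real.log d := by
    rw [hq, mul_div_cancel₀ _ hL.ne']; simp
  have hq0 : 0 ≤ q := div_nonneg (Real.log_nonneg ((one_le_div hd0).2 hd1)) hL.le
  have hlaw : ∀ n, μ.map (X n) = binomial n P := by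
    intro n
    refine Measure.ext_of_singleton fun k => ?_
    rw [Measure.map_apply (hXmeas n) (measurableSet_singleton k), binomial_singleton]
    exact hXbin n k
  have hkt : ∀ n k : ℕ, k ≤ ktilde n u d ↔ (k : ℝ) ≤ n * q := by
    intro n k
    rw [ktilde, mul_div_assoc, ← hLdef, ← hq, Nat.le_floor_iff (by positivity)]
  have hvar : ∀ n, Var[T n; μ] = Var[gfun L q n; binomial n P] := by
    intro n
    rw [← hlaw n, variance_map (Measurable.of_discrete).aemeasurable (hXmeas n).aemeasurable]
    refine variance_congr ?_
    have hae : ∀ᵐ ω ∂μ, X n ω ≤ n := by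
      have := bin_ae_le n P
      rw [← hlaw n] at this
      exact ae_of_ae_map (hXmeas n).aemeasurable this
    filter_upwards [hae] with ω hω
    rw [hT, Function.comp_apply, gfun, Finset.sum_ite_eq]
    simp only [Finset.mem_range, Nat.lt_succ_iff, ← hkt, Nat.succ_le_iff]
    by_cases h : X n ω ≤ ktilde n u d
    · rw [if_pos h, if_pos h, if_neg (by omega)]
      have : Real.exp (L * ((X n ω : ℝ) - n * q)) = u ^ X n ω * d ^ (n - X n ω) := by
        rw [← Real.exp_log (x := u ^ X n ω * d ^ (n - X n ω)) (by positivity),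
          Real.log_mul (by positivity) (by positivity), Real.log_pow, Real.log_pow,
          Nat.cast_sub hω]
        congr 1
        have : L * ((X n ω : ℝ) - n * q) = L * X n ω - n * (L * q) := by ring
        rw [this, hLq, hlog]
        ring
      rw [this]; ring
    · rw [if_neg h, if_neg h, if_pos (by omega)]
      norm_num
  have hiff : u ^ p * d ^ (1 - p) = 1 ↔ p = q := by
    have hpos : 0 < u ^ p * d ^ (1 - p) := by positivity
    have h1 : Real.log (u ^ p * d ^ (1 - p)) = L * (p - q) := by
      rw [Real.log_mul (by positivity) (by positivity), Real.log_rpow hu0, Real.log_rpow hd0,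
        mul_sub, hLq, hlog]
      ring
    constructor
    · intro h
      rw [h, Real.log_one] at h1
      have := (mul_eq_zero.1 h1.symm).resolve_left hL.ne'
      linarith
    · intro h
      rw [h, sub_self, mul_zero] at h1
      rw [h]
      rw [h] at hpos
      exact Real.eq_one_of_pos_of_log_eq_zero hpos h1
  simp_rw [hvar]
  refine ⟨fun h => var_ne hL P (fun h' => h (hiff.2 h')), fun h => ?_⟩
  have := var_eq hL P hp0 hp1
  rwa [show (P : ℝ) = q from hiff.1 h] at this
end

section
/- Let $p \in (0,1)$, $0 < d \le 1 \le u$ with $u \ne d$ and $u^p d^{1-p} = 1$, $\tilde{k}_0(n,u,d) = \lfloor n \ln(1/d)/\ln(u/d) \rfloor$, let $X_n$ be a Binomial$(n,p)$ random variable, and define the net profit $T_n = -1 + \sum_{k=0}^{\tilde{k}_0(n,u,d)} \mathbf{1}\{X_n = k\}\, u^k d^{n-k} + 2\cdot\mathbf{1}\{X_n \ge \tilde{k}_0(n,u,d)+1\}$. Then $T_n$ converges in distribution, as $n \to \infty$, to the random variable $Z$ with two-point distribution $\mathbb{P}(Z = 1) = \mathbb{P}(Z = -1) = 1/2$. -/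
open Filter MeasureTheory

open ProbabilityTheory Topology in
lemma aux_charFun {p : ℝ} (hp0 : 0 < p) (hp1 : p < 1) (s : ℝ) (n : ℕ) (t : ℝ) :
    ∫ k : ℕ, Complex.exp (t * (((√n)⁻¹ * (((k : ℝ) - n * p) / s) : ℝ) : ℂ) * Complex.I)
      ∂(binomial n ⟨p, hp0.le, hp1.le⟩) =
    (charFun ((bernoulliMeasure ((1 - p) / s) (-p / s) ⟨p, hp0.le, hp1.le⟩).map id)
      ((√n)⁻¹ * t)) ^ n := by
  rw [integral_binomial, Measure.map_id, charFun_apply_real, integral_bernoulliMeasure, add_pow]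
  rw [← Nat.range_succ_eq_Iic]
  apply Finset.sum_congr rfl
  intro k hk
  have hk' : k ≤ n := by simpa [Nat.lt_succ_iff] using hk
  obtain ⟨m, rfl⟩ := Nat.exists_eq_add_of_le hk'
  simp only [Complex.real_smul, mul_pow, ← Complex.exp_nat_mul, Nat.add_sub_cancel_left]
  push_cast
  have : Complex.exp (t * ((√((k:ℝ)+m) : ℂ)⁻¹ * ((k - (k + m) * p) / s)) * Complex.I)
    = Complex.exp (k * ((√((k:ℝ)+m) : ℂ)⁻¹ * t * ((1 - p) / s) * Complex.I)) *
      Complex.exp (m * ((√((k:ℝ)+m) : ℂ)⁻¹ * t * (-p / s) * Complex.I)) := by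
    rw [← Complex.exp_add]
    congr 1
    ring
  rw [this]
  ring

open ProbabilityTheory Topology in
lemma aux_clt {Ω : Type*} [MeasurableSpace Ω] (μ : Measure Ω) [IsProbabilityMeasure μ]
    (p : ℝ) (hp0 : 0 < p) (hp1 : p < 1)
    (X : ℕ → Ω → ℕ) (hXmeas : ∀ n, Measurable (X n))
    (hXbin : ∀ n k : ℕ,
      μ {ω | X n ω = k} = ENNReal.ofReal ((n.choose k : ℝ) * p^k * (1 - p)^(n-k)))
    (E : Set ℝ) (hE : MeasurableSet E) (hE0 : gaussianReal 0 1 (frontier E) = 0) :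
    Tendsto (fun n : ℕ => μ {ω | (√n)⁻¹ * (((X n ω : ℝ) - n * p) / √(p * (1 - p))) ∈ E}) atTop
      (𝓝 (gaussianReal 0 1 E)) := by
  set s := √(p * (1 - p)) with hs
  have hpp : 0 < p * (1 - p) := mul_pos hp0 (by linarith)
  have hs0 : 0 < s := Real.sqrt_pos.2 hpp
  have hs2 : s ^ 2 = p * (1 - p) := Real.sq_sqrt hpp.le
  have hmap : ∀ n, μ.map (X n) = binomial n ⟨p, hp0.le, hp1.le⟩ := by
    intro n
    refine Measure.ext_of_singleton fun k => ?_
    rw [binomial_singleton, Measure.map_apply (hXmeas n) (measurableSet_singleton k)]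
    exact hXbin n k
  set g : ℕ → ℕ → ℝ := fun n k => (√n)⁻¹ * (((k : ℝ) - n * p) / s) with hg
  have hgm : ∀ n, Measurable (g n) := fun n => measurable_of_countable _
  have hYm : ∀ n, Measurable (fun ω => g n (X n ω)) := fun n => (hgm n).comp (hXmeas n)
  let P : ℕ → ProbabilityMeasure ℝ := fun n =>
    ⟨μ.map (fun ω => g n (X n ω)), Measure.isProbabilityMeasure_map (hYm n).aemeasurable⟩
  let G : ProbabilityMeasure ℝ := ⟨gaussianReal 0 1, inferInstance⟩
  have hlim : Tendsto P atTop (𝓝 G) := by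
    refine ProbabilityMeasure.tendsto_iff_tendsto_charFun.2 fun t => ?_
    have h := tendsto_charFun_inv_sqrt_mul_pow
      (P := bernoulliMeasure ((1 - p) / s) (-p / s) ⟨p, hp0.le, hp1.le⟩) (X := id)
      aemeasurable_id ?_ ?_ t
    · have e1 : charFun (G : Measure ℝ) t = Complex.exp (-t ^ 2 / 2) := by
        simp [G, charFun_gaussianReal, neg_div]
      rw [e1]
      refine h.congr fun n => ?_
      rw [← aux_charFun hp0 hp1, ← hmap n, charFun_apply_real]
      simp only [P, ProbabilityMeasure.coe_mk]
      rw [integral_map (hYm n).aemeasurable (by fun_prop),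
        integral_map (hXmeas n).aemeasurable (Measurable.of_discrete).aestronglyMeasurable]
    · rw [integral_bernoulliMeasure]
      simp only [id, smul_eq_mul]
      ring
    · rw [integral_bernoulliMeasure]
      simp only [id, smul_eq_mul, Pi.pow_apply, div_pow, hs2]
      have : (1 - p) ≠ 0 := by linarith
      field_simp
      ring
  have := ProbabilityMeasure.tendsto_measure_of_null_frontier_of_tendsto' hlim (E := E) hE0
  refine this.congr fun n => ?_
  simp only [P, ProbabilityMeasure.coe_mk]
  rw [Measure.map_apply (hYm n) hE]
  rfl

open ProbabilityTheory in
lemma aux_half : (gaussianReal 0 1).real (Set.Ioi 0) = 1 / 2 := by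
  have : NullSingletonClass (gaussianReal 0 1) := nullSingletonClass_gaussianReal one_ne_zero
  have h1 : (gaussianReal 0 1).real (Set.Ioi 0) = (gaussianReal 0 1).real (Set.Iio 0) := by
    have := gaussianReal_map_neg (μ := 0) (v := 1)
    rw [neg_zero] at this
    conv_lhs => rw [← this]
    rw [map_measureReal_apply (by fun_prop) measurableSet_Ioi]
    congr 1
    ext x; simp
  have h2 : (gaussianReal 0 1).real (Set.Iic 0) = (gaussianReal 0 1).real (Set.Iio 0) :=
    measureReal_congr Iio_ae_eq_Iic.symm
  have h3 := probReal_compl_eq_one_sub (μ := gaussianReal 0 1) (measurableSet_Ioi (a := (0:ℝ)))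
  rw [Set.compl_Ioi] at h3
  linarith

lemma aux_threshold {p u d : ℝ} (hd0 : 0 < d) (hd1 : d ≤ 1) (hu : 1 ≤ u) (hne : u ≠ d)
    (hcrit : u ^ p * d ^ (1 - p) = 1) :
    0 < Real.log (u / d) ∧ Real.log d = - (p * Real.log (u / d)) ∧
      Real.log u = (1 - p) * Real.log (u / d) ∧
      ∀ n : ℕ, ktilde n u d = ⌊(n : ℝ) * p⌋₊ := by
  have hu0 : 0 < u := by linarith
  have hlt : d < u := lt_of_le_of_ne (hd1.trans hu) hne.symm
  have hL : 0 < Real.log (u / d) := Real.log_pos ((one_lt_div hd0).2 hlt)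
  have hLe : Real.log (u / d) = Real.log u - Real.log d := Real.log_div hu0.ne' hd0.ne'
  have h := congrArg Real.log hcrit
  rw [Real.log_mul (Real.rpow_pos_of_pos hu0 _).ne' (Real.rpow_pos_of_pos hd0 _).ne',
    Real.log_rpow hu0, Real.log_rpow hd0, Real.log_one] at h
  have h1 : Real.log d = - (p * Real.log (u / d)) := by rw [hLe]; linarith
  refine ⟨hL, h1, by rw [hLe]; linarith, fun n => ?_⟩
  unfold ktilde
  congr 1
  rw [one_div, Real.log_inv, h1]
  field_simp

lemma aux_T {p u d : ℝ} (hp0 : 0 < p) (hp1 : p < 1) (hd0 : 0 < d) (hd1 : d ≤ 1) (hu : 1 ≤ u)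
    (hne : u ≠ d) (hcrit : u ^ p * d ^ (1 - p) = 1) (n x : ℕ) :
    (-1 + (∑ k ∈ Finset.range (ktilde n u d + 1), if x = k then u^k * d^(n-k) else 0)
        + 2 * (if ktilde n u d + 1 ≤ x then (1 : ℝ) else 0)) =
    if (n : ℝ) * p < x then 1 else Real.exp (Real.log (u / d) * (x - n * p)) - 1 := by
  obtain ⟨hL, h1, h2, h3⟩ := aux_threshold hd0 hd1 hu hne hcrit
  have hnp : 0 ≤ (n : ℝ) * p := by positivity
  have hu0 : 0 < u := by linarith
  have hiff : ktilde n u d + 1 ≤ x ↔ (n : ℝ) * p < x := by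
    rw [h3, Nat.add_one_le_iff, Nat.floor_lt hnp]
  rw [Finset.sum_ite_eq]
  by_cases hx : (n : ℝ) * p < x
  · have h' := hiff.2 hx
    rw [if_pos hx, if_pos h', if_neg (by simpa using h')]
    norm_num
  · have h' := mt hiff.1 hx
    have hxn : x ≤ n := by
      have : (x : ℝ) ≤ n := by
        have : (n : ℝ) * p ≤ n := mul_le_of_le_one_right (by positivity) hp1.le
        linarith
      exact_mod_cast this
    rw [if_neg hx, if_neg h', if_pos (by simpa using h')]
    have : u ^ x * d ^ (n - x) = Real.exp (Real.log (u / d) * (x - n * p)) := by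
      rw [← Real.exp_log hu0, ← Real.exp_log hd0, ← Real.exp_nat_mul, ← Real.exp_nat_mul,
        ← Real.exp_add, Real.exp_log hu0, Real.exp_log hd0, h1, h2, Nat.cast_sub hxn]
      congr 1
      ring
    rw [this]
    ring

open ProbabilityTheory Topology in
/-- In the critical case `u^p * d^(1-p) = 1`, the net profit `T n` converges in
distribution to the two-point distribution with mass `1/2` at `1` and at `-1`:
for every bounded continuous test function `f`, the expectations
`∫ f (T n ω) ∂μ` converge to `(f 1 + f (-1)) / 2`. -/
theorem net_profit_tendsto_in_distribution_two_point
    {Ω : Type*} [MeasurableSpace Ω] (μ : Measure Ω) [IsProbabilityMeasure μ]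
    (p u d : ℝ) (hp0 : 0 < p) (hp1 : p < 1)
    (hd0 : 0 < d) (hd1 : d ≤ 1) (hu : 1 ≤ u) (hne : u ≠ d)
    (hcrit : u ^ p * d ^ (1 - p) = 1)
    (X : ℕ → Ω → ℕ) (hXmeas : ∀ n, Measurable (X n))
    (hXbin : ∀ n k : ℕ,
      μ {ω | X n ω = k} = ENNReal.ofReal ((n.choose k : ℝ) * p^k * (1 - p)^(n-k)))
    (T : ℕ → Ω → ℝ)
    (hT : ∀ n ω, T n ω =
      -1 + (∑ k ∈ Finset.range (ktilde n u d + 1),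
              if X n ω = k then u^k * d^(n-k) else 0)
        + 2 * (if ktilde n u d + 1 ≤ X n ω then (1 : ℝ) else 0)) :
    ∀ f : BoundedContinuousFunction ℝ ℝ,
      Tendsto (fun n : ℕ => ∫ ω, f (T n ω) ∂μ) atTop
        (nhds ((f 1 + f (-1)) / 2)) := by
  intro f
  have : NullSingletonClass (gaussianReal 0 1) := nullSingletonClass_gaussianReal one_ne_zero
  obtain ⟨hL, -, -, -⟩ := aux_threshold hd0 hd1 hu hne hcrit
  set L := Real.log (u / d) with hLdef
  have hT' : ∀ n ω, T n ω = if (n : ℝ) * p < X n ω then 1 else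
      Real.exp (L * (X n ω - n * p)) - 1 := fun n ω => by
    rw [hT, aux_T hp0 hp1 hd0 hd1 hu hne hcrit]
  have hclt := aux_clt μ p hp0 hp1 X hXmeas hXbin
  set s := √(p * (1 - p)) with hs
  have hs0 : 0 < s := Real.sqrt_pos.2 (mul_pos hp0 (by linarith))
  set Y : ℕ → Ω → ℝ := fun n ω => (√n)⁻¹ * (((X n ω : ℝ) - n * p) / s) with hY
  have hYm : ∀ n, Measurable (Y n) := fun n =>
    (Measurable.of_discrete (f := fun k : ℕ => (√n)⁻¹ * (((k : ℝ) - n * p) / s))).comp (hXmeas n)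
  have hTm : ∀ n, Measurable (T n) := fun n => by
    have : T n = (fun k : ℕ => if (n : ℝ) * p < k then (1 : ℝ) else
      Real.exp (L * (k - n * p)) - 1) ∘ X n := by ext ω; exact hT' n ω
    rw [this]
    exact (Measurable.of_discrete).comp (hXmeas n)
  have hclt' : ∀ E : Set ℝ, MeasurableSet E → gaussianReal 0 1 (frontier E) = 0 →
      Tendsto (fun n => μ.real (Y n ⁻¹' E)) atTop (𝓝 ((gaussianReal 0 1).real E)) := fun E h1 h2 =>
    (ENNReal.tendsto_toReal (measure_ne_top _ _)).comp (hclt E h1 h2)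
  have hA : Tendsto (fun n => μ.real (Y n ⁻¹' Set.Ioi 0)) atTop (𝓝 (1 / 2)) := by
    rw [← aux_half]
    exact hclt' _ measurableSet_Ioi (by rw [frontier_Ioi]; exact measure_singleton _)
  -- the Gaussian scale
  have hTY : ∀ n : ℕ, 0 < n → ∀ ω, T n ω = if 0 < Y n ω then 1 else
      Real.exp (L * s * √n * Y n ω) - 1 := by
    intro n hn ω
    have hn' : 0 < √(n : ℝ) := Real.sqrt_pos.2 (by exact_mod_cast hn)
    have e : L * s * √n * Y n ω = L * (X n ω - n * p) := by
      simp only [hY]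
      field_simp
    have e2 : 0 < Y n ω ↔ (n : ℝ) * p < X n ω := by
      simp only [hY]
      rw [mul_pos_iff_of_pos_left (inv_pos.2 hn'), div_pos_iff_of_pos_right hs0, sub_pos]
    rw [hT', e]
    simp only [e2]
  have hint : ∀ n, Integrable (fun ω => f (T n ω)) μ := fun n =>
    Integrable.of_bound (f.continuous.measurable.comp (hTm n)).aestronglyMeasurable ‖f‖
      (Eventually.of_forall fun ω => f.norm_coe_le_norm _)
  have hD : Tendsto (fun n : ℕ => ∫ ω, f (T n ω) ∂μ -
      ((f 1 - f (-1)) * μ.real (Y n ⁻¹' Set.Ioi 0) + f (-1))) atTop (𝓝 0) := by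
    rw [Metric.tendsto_nhds]
    intro η hη
    set K := 2 * ‖f‖ + 1 with hK
    have hK0 : 0 < K := by positivity
    obtain ⟨ε, hε, hεs⟩ : ∃ ε : ℝ, 0 < ε ∧ (gaussianReal 0 1).real (Set.Icc (-ε) ε) < η / 2 / K := by
      have h1 := (ENNReal.tendsto_toReal ENNReal.zero_ne_top).comp
        (tendsto_measure_Icc (gaussianReal 0 1) 0)
      have h2 := (h1.mono_left (nhdsWithin_le_nhds (s := Set.Ioi 0))).eventually
        (gt_mem_nhds (show ENNReal.toReal 0 < η / 2 / K by rw [ENNReal.toReal_zero]; positivity))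
      obtain ⟨ε, h3, h4⟩ := (h2.and self_mem_nhdsWithin).exists
      exact ⟨ε, h4, by simpa [measureReal_def] using h3⟩
    have hI := (hclt' (Set.Icc (-ε) ε) measurableSet_Icc (by
      rw [frontier_Icc (by linarith)]
      exact (Set.toFinite _).measure_zero _)).eventually (gt_mem_nhds hεs)
    obtain ⟨δ, hδ, hfδ⟩ := Metric.continuous_iff.1 f.continuous (-1) (η / 2) (by positivity)
    have hexp : ∀ᶠ n : ℕ in atTop, Real.exp (-(L * s * ε * √n)) < δ := by
      have h1 : Tendsto (fun n : ℕ => L * s * ε * √(n : ℝ)) atTop atTop :=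
        (Real.tendsto_sqrt_atTop.comp tendsto_natCast_atTop_atTop).const_mul_atTop (by positivity)
      exact (Real.tendsto_exp_neg_atTop_nhds_zero.comp h1).eventually (gt_mem_nhds hδ)
    filter_upwards [hI, hexp, eventually_gt_atTop 0] with n hn1 hn2 hn3
    have hIc : MeasurableSet (Y n ⁻¹' Set.Icc (-ε) ε) := hYm n measurableSet_Icc
    have hIo : MeasurableSet (Y n ⁻¹' Set.Ioi 0) := hYm n measurableSet_Ioi
    have hpt : ∀ ω, |f (T n ω) - ((Y n ⁻¹' Set.Ioi 0).indicator (fun _ => f 1 - f (-1)) ω + f (-1))|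
        ≤ (Y n ⁻¹' Set.Icc (-ε) ε).indicator (fun _ => K) ω + η / 2 := by
      intro ω
      have hnn : 0 ≤ (Y n ⁻¹' Set.Icc (-ε) ε).indicator (fun _ => K) ω :=
        Set.indicator_nonneg (fun _ _ => hK0.le) _
      rw [hTY n hn3]
      by_cases h0 : 0 < Y n ω
      · rw [if_pos h0, Set.indicator_of_mem (by exact h0)]
        simp only [sub_add_cancel, sub_self, abs_zero]
        positivity
      · rw [if_neg h0, Set.indicator_of_notMem (by exact h0), zero_add]
        by_cases h1 : -ε ≤ Y n ω
        · rw [Set.indicator_of_mem (by exact ⟨h1, by linarith⟩)]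
          have a1 := f.norm_coe_le_norm (Real.exp (L * s * √n * Y n ω) - 1)
          have a2 := f.norm_coe_le_norm (-1)
          have a3 := norm_sub_le (f (Real.exp (L * s * √n * Y n ω) - 1)) (f (-1))
          rw [Real.norm_eq_abs (_ - _)] at a3
          linarith
        · have hlt : Real.exp (L * s * √n * Y n ω) < δ := by
            refine lt_of_le_of_lt (Real.exp_le_exp.2 ?_) hn2
            have : L * s * √n * Y n ω ≤ L * s * √n * (-ε) :=
              mul_le_mul_of_nonneg_left (by linarith) (by positivity)
            linarith
          have := hfδ (Real.exp (L * s * √n * Y n ω) - 1) (by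
            rw [Real.dist_eq]
            simp only [sub_neg_eq_add, sub_add_cancel, abs_of_pos (Real.exp_pos _)]
            exact hlt)
          rw [Real.dist_eq] at this
          linarith
    have i1 : Integrable ((Y n ⁻¹' Set.Ioi 0).indicator (fun _ => f 1 - f (-1))) μ :=
      (integrable_const _).indicator hIo
    have i2 : Integrable ((Y n ⁻¹' Set.Icc (-ε) ε).indicator (fun _ => K)) μ :=
      (integrable_const _).indicator hIc
    have e1 : ∫ ω, f (T n ω) ∂μ - ((f 1 - f (-1)) * μ.real (Y n ⁻¹' Set.Ioi 0) + f (-1)) =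
        ∫ ω, (f (T n ω) -
          ((Y n ⁻¹' Set.Ioi 0).indicator (fun _ => f 1 - f (-1)) ω + f (-1))) ∂μ := by
      have i3 : Integrable (fun ω => (Y n ⁻¹' Set.Ioi 0).indicator (fun _ => f 1 - f (-1)) ω +
          f (-1)) μ := i1.add (integrable_const _)
      rw [integral_sub (hint n) i3, integral_add i1 (integrable_const _),
        integral_indicator_const _ hIo]
      simp [mul_comm]
    rw [Real.dist_eq, sub_zero, e1]
    refine (abs_integral_le_integral_abs).trans_lt ?_
    refine (integral_mono ((hint n).sub (i1.add (integrable_const _))).abs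
      (i2.add (integrable_const (η / 2))) hpt).trans_lt ?_
    have e2 : ∫ ω, ((Y n ⁻¹' Set.Icc (-ε) ε).indicator (fun _ => K) ω + η / 2) ∂μ =
        μ.real (Y n ⁻¹' Set.Icc (-ε) ε) * K + η / 2 := by
      rw [integral_add i2 (integrable_const _), integral_indicator_const _ hIc]
      simp
    refine (le_of_eq e2).trans_lt ?_
    have := (lt_div_iff₀ hK0).1 hn1
    linarith
  have := hD.add ((hA.const_mul (f 1 - f (-1))).add_const (f (-1)))
  refine (this.congr fun n => by ring).trans (le_of_eq ?_)
  congr 1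
  ring
end
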